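/- arXiv:2402.16062 — 6 statements merged into one kernel-verified Lean document; each statement's English description precedes it below -/
import Mathlib

section
/- Let r ∈ [0,1) and define Φ(t) = ∫_{−π}^{π} |4 cos(b+t) − 2r cos t| · (1+r²+2r cos b)/(1−r²) db (the case α = 2). Then Φ(t) ≤ Φ(π/2) for every t ∈ ℝ, i.e. Φ attains its maximum at t = π/2. -/
open Real

/-!
Substituting `x = b + t` and writing `s = r cos t / 2`, `A = 1 + r²`, the integral becomes
`4 / (1 - r²) * ∫ |cos x - s| (A + 2 r cos (x - t)) dx` over a period. Taking the period
`[-a, 2π - a]` with `a = arccos s`, the sign of `cos x - s` is constant on `[-a, a]` and on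
`[a, 2π - a]`, so the fundamental theorem of calculus gives the closed form
`16 ((A - 2 s²) √(1 - s²) - (2 - A) s arcsin s) / (1 - r²)` (`Phi_closed_form`).
As `A ≤ 2` and `s arcsin s ≥ 0`, it is at most `16 A / (1 - r²)`, which is the value at `s = 0`,
i.e. at `t = π / 2`.
-/

/-- The integrand without its absolute value, after the shift `x = b + t` and expansion of
`cos (x - t)`; here `m` stands for `2 r sin t` and `4 s` for `2 r cos t`. -/
theorem integral_signed (A s m u v : ℝ) :
    ∫ x in u..v, (cos x - s) * (A + 4 * s * cos x + m * sin x) =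
      (A * sin v + 2 * s * (v + sin v * cos v) + m * sin v ^ 2 / 2 - s * A * v
        - 4 * s ^ 2 * sin v + s * m * cos v) -
      (A * sin u + 2 * s * (u + sin u * cos u) + m * sin u ^ 2 / 2 - s * A * u
        - 4 * s ^ 2 * sin u + s * m * cos u) := by
  refine intervalIntegral.integral_eq_sub_of_hasDerivAt (f := fun x =>
    A * sin x + 2 * s * (x + sin x * cos x) + m * sin x ^ 2 / 2 - s * A * x
        - 4 * s ^ 2 * sin x + s * m * cos x) (fun x _ => ?_)
    (Continuous.intervalIntegrable (by fun_prop) _ _)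
  have hs := hasDerivAt_sin x
  have hc := hasDerivAt_cos x
  have h := ((((((hs.const_mul A).fun_add
    (((hasDerivAt_id' x).fun_add (hs.fun_mul hc)).const_mul (2 * s))).fun_add
    (((hs.fun_pow 2).const_mul m).div_const 2)).fun_sub ((hasDerivAt_id' x).const_mul (s * A))).fun_sub
    (hs.const_mul (4 * s ^ 2))).fun_add (hc.const_mul (s * m)))
  convert h using 1
  have := sin_sq_add_cos_sq x
  simp
  linear_combination (2 * s) * this

theorem integral_abs (A s m : ℝ) (h1 : -1 ≤ s) (h2 : s ≤ 1) :
    ∫ x in (-arccos s)..(-arccos s + 2 * π),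
      |cos x - s| * (A + 4 * s * cos x + m * sin x) =
      4 * ((A - 2 * s ^ 2) * √(1 - s ^ 2) - (2 - A) * (s * arcsin s)) := by
  have ha0 := arccos_nonneg s
  have haπ := arccos_le_pi s
  have hcos := cos_arccos h1 h2
  have hsin := sin_arccos s
  have harc : arccos s = π / 2 - arcsin s := rfl
  have hint : ∀ u v, IntervalIntegrable
      (fun x => |cos x - s| * (A + 4 * s * cos x + m * sin x)) MeasureTheory.volume u v :=
    fun u v => Continuous.intervalIntegrable (by fun_prop) _ _
  rw [← intervalIntegral.integral_add_adjacent_intervals (hint (-arccos s) (arccos s))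
    (hint (arccos s) _)]
  have e1 : ∫ x in (-arccos s)..(arccos s), |cos x - s| * (A + 4 * s * cos x + m * sin x) =
      ∫ x in (-arccos s)..(arccos s), (cos x - s) * (A + 4 * s * cos x + m * sin x) := by
    refine intervalIntegral.integral_congr fun x hx => ?_
    rw [Set.uIcc_of_le (by linarith)] at hx
    have : s ≤ cos x := by
      rw [← cos_abs x, ← hcos]
      exact cos_le_cos_of_nonneg_of_le_pi (abs_nonneg x) haπ (abs_le.2 hx)
    simp only [abs_of_nonneg (sub_nonneg.2 this)]
  have e2 : ∫ x in (arccos s)..(-arccos s + 2 * π),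
        |cos x - s| * (A + 4 * s * cos x + m * sin x) =
      -∫ x in (arccos s)..(-arccos s + 2 * π),
        (cos x - s) * (A + 4 * s * cos x + m * sin x) := by
    rw [← intervalIntegral.integral_neg]
    refine intervalIntegral.integral_congr fun x hx => ?_
    rw [Set.uIcc_of_le (by linarith)] at hx
    have : cos x ≤ s := by
      -- on this interval `|π - x| ≤ π - arccos s`, and `cos` is decreasing on `[0, π]`
      have h := cos_le_cos_of_nonneg_of_le_pi (abs_nonneg (π - x))
        (sub_le_self π ha0) (abs_le.2 ⟨by linarith [hx.2], by linarith [hx.1]⟩)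
      rw [cos_abs, cos_pi_sub, cos_pi_sub, hcos] at h
      linarith
    simp only [abs_of_nonpos (sub_nonpos.2 this), neg_mul]
  rw [e1, e2, integral_signed, integral_signed]
  simp only [cos_add_two_pi, sin_add_two_pi, cos_neg, sin_neg, hcos, hsin]
  rw [harc]
  ring

theorem Phi_closed_form (r t : ℝ) (h0 : 0 ≤ r) (h1 : r ≤ 1) :
    ∫ b in (-π)..π, |4 * cos (b + t) - 2 * r * cos t| *
        (1 + r ^ 2 + 2 * r * cos b) / (1 - r ^ 2) =
      16 * ((1 + r ^ 2 - 2 * (r * cos t / 2) ^ 2) * √(1 - (r * cos t / 2) ^ 2)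
        - (1 - r ^ 2) * (r * cos t / 2 * arcsin (r * cos t / 2))) / (1 - r ^ 2) := by
  obtain ⟨hc1, hc2⟩ := abs_le.1 (abs_cos_le_one t)
  have hs1 : -1 ≤ r * cos t / 2 := by nlinarith
  have hs2 : r * cos t / 2 ≤ 1 := by nlinarith
  rw [intervalIntegral.integral_div]
  congr 1
  set f : ℝ → ℝ := fun x => |cos x - r * cos t / 2| *
    (1 + r ^ 2 + 4 * (r * cos t / 2) * cos x + 2 * r * sin t * sin x) with hf
  have hper : Function.Periodic f (2 * π) := fun x => by simp [hf]
  have hshift : ∀ b, |4 * cos (b + t) - 2 * r * cos t| * (1 + r ^ 2 + 2 * r * cos b) =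
      4 * f (b + t) := by
    intro b
    have e : 4 * cos (b + t) - 2 * r * cos t = 4 * (cos (b + t) - r * cos t / 2) := by ring
    have e' : cos b = cos (b + t) * cos t + sin (b + t) * sin t := by
      rw [← cos_sub, add_sub_cancel_right]
    rw [e, abs_mul, abs_of_pos (by norm_num : (0 : ℝ) < 4), e']
    simp only [hf]
    ring
  simp only [hshift]
  rw [intervalIntegral.integral_const_mul, intervalIntegral.integral_comp_add_right f t]
  have := hper.intervalIntegral_add_eq (-π + t) (-arccos (r * cos t / 2))
  rw [show -π + t + 2 * π = π + t by ring] at this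
  rw [this, hf, integral_abs _ _ _ hs1 hs2]
  ring

theorem Phi_max_alpha_two
    (r : ℝ) (hr : r ∈ Set.Ico (0 : ℝ) 1)
    (Φ : ℝ → ℝ)
    (hΦ : ∀ t : ℝ, Φ t =
      ∫ b in (-π)..π,
        |4 * Real.cos (b + t) - 2 * r * Real.cos t| *
          (1 + r ^ 2 + 2 * r * Real.cos b) / (1 - r ^ 2)) :
    ∀ t : ℝ, Φ t ≤ Φ (π / 2) := by
  intro t
  obtain ⟨h0, h1⟩ := hr
  have hpos : 0 < 1 - r ^ 2 := by nlinarith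
  rw [hΦ, hΦ, Phi_closed_form r t h0 h1.le, Phi_closed_form r _ h0 h1.le]
  obtain ⟨hc1, hc2⟩ := abs_le.1 (abs_cos_le_one t)
  have hs1 : -1 ≤ r * cos t / 2 := by nlinarith
  have hs2 : r * cos t / 2 ≤ 1 := by nlinarith
  simp only [cos_pi_div_two]
  generalize r * cos t / 2 = s at hs1 hs2
  have hasin : 0 ≤ s * arcsin s := by
    rcases le_total 0 s with h | h
    · exact mul_nonneg h (arcsin_nonneg.2 h)
    · exact mul_nonneg_of_nonpos_of_nonpos h (arcsin_nonpos.2 h)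
  have hq0 := sqrt_nonneg (1 - s ^ 2)
  have hq1 : √(1 - s ^ 2) ≤ 1 := sqrt_le_one.2 (by nlinarith [sq_nonneg s])
  refine div_le_div_of_nonneg_right ?_ hpos.le
  norm_num
  nlinarith [mul_nonneg hpos.le hasin, mul_nonneg (sq_nonneg s) hq0,
    mul_nonneg (by positivity : 0 ≤ 1 + r ^ 2) (sub_nonneg.2 hq1)]
end

section
/- Let r ∈ [0,1) and define Φ(t) = ∫_{−π}^{π} |6 cos(b+t) − 4r cos t| · (1+r²+2r cos b)²/(1−r²) db (the case α = 4). Then Φ(t) ≤ Φ(π/2) for every t ∈ ℝ, i.e. Φ attains its maximum at t = π/2. -/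
open Real

/-!
Put `θ = arcsin ((2 r / 3) cos t)`. After the shift `v = b + t + π / 2` the integral becomes, up to
the factor `6 / (1 - r ^ 2)`, the integral over one period of
`|sin v - sin θ| * (A + B (cos t * sin v - sin t * cos v)) ^ 2` with `A = 1 + r ^ 2`, `B = 2 r`.
On `[θ, θ + 2π]` the quantity `sin v - sin θ` changes sign only at `π - θ`, so the integral has a
closed form in `θ`, `sin θ`, `cos θ` (`integral_abs_sin_sub`).

Since `B cos t = 3 sin θ`, the difference of the values at `t` and at `π / 2` (where `θ = 0`) is a
function of `r` and `θ` alone. The coefficient of `θ sin θ` in it is a positive multiple of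
`2 A ^ 2 - 6 A + B ^ 2 = 2 (r ^ 2 + 2) (r ^ 2 - 1) ≤ 0`, so `θ sin θ` may be replaced by its lower
bound `sin θ ^ 2`. What remains is `1 - cos θ` times a polynomial in `r ^ 2` and `cos θ` that is
nonpositive on `[0, 1] × [0, 1]` (`closed_form_le`).
-/

/-- An antiderivative of `(sin v - a) * (A + B * (c * sin v - d * cos v)) ^ 2`. -/
noncomputable def primitiveAux (a A B c d v : ℝ) : ℝ :=
  (A ^ 2 + B ^ 2 * d ^ 2) * (-cos v - a * v)
    + 2 * A * B * c * ((v - sin v * cos v) / 2 + a * cos v)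
    + B ^ 2 * (c ^ 2 - d ^ 2) * (-cos v + cos v ^ 3 / 3 - a * ((v - sin v * cos v) / 2))
    - 2 * A * B * d * (sin v ^ 2 / 2 - a * sin v)
    - 2 * B ^ 2 * c * d * (sin v ^ 3 / 3 - a * (sin v ^ 2 / 2))

lemma hasDerivAt_primitiveAux (a A B c d v : ℝ) :
    HasDerivAt (primitiveAux a A B c d)
      ((sin v - a) * (A + B * (c * sin v - d * cos v)) ^ 2) v := by
  have hs := hasDerivAt_sin v
  have hc := hasDerivAt_cos v
  have hi := hasDerivAt_id' v
  have hj := (hi.sub (hs.mul hc)).div_const 2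
  have h := ((((((hc.neg.sub (hi.const_mul a)).const_mul (A ^ 2 + B ^ 2 * d ^ 2)).add
    ((hj.add (hc.const_mul a)).const_mul (2 * A * B * c))).add
    (((hc.neg.add ((hc.pow 3).div_const 3)).sub (hj.const_mul a)).const_mul
      (B ^ 2 * (c ^ 2 - d ^ 2)))).sub
    ((((hs.pow 2).div_const 2).sub (hs.const_mul a)).const_mul (2 * A * B * d))).sub
    ((((hs.pow 3).div_const 3).sub (((hs.pow 2).div_const 2).const_mul a)).const_mul
      (2 * B ^ 2 * c * d)))
  refine h.congr_deriv ?_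
  have h1 : sin v ^ 2 = 1 - cos v ^ 2 := by linarith [sin_sq_add_cos_sq v]
  have h3 : sin v ^ 3 = sin v * (1 - cos v ^ 2) := by rw [← h1]; ring
  push_cast
  ring_nf
  simp only [h1, h3]
  ring

lemma integral_abs_sin_sub {θ : ℝ} (h1 : -(π / 2) ≤ θ) (h2 : θ ≤ π / 2) (A B c d : ℝ) :
    ∫ v in θ..(θ + 2 * π), |sin v - sin θ| * (A + B * (c * sin v - d * cos v)) ^ 2 =
      (A ^ 2 + B ^ 2 * d ^ 2) * (4 * cos θ + 4 * θ * sin θ)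
      - 4 * A * B * c * (θ + sin θ * cos θ)
      + B ^ 2 * (c ^ 2 - d ^ 2) *
        (4 * cos θ - 4 / 3 * cos θ ^ 3 + 2 * θ * sin θ - 2 * sin θ ^ 2 * cos θ) := by
  have hpi := pi_pos
  have hfac : ∀ v, sin v - sin θ = 2 * sin ((v - θ) / 2) * cos ((v + θ) / 2) :=
    fun v => sin_sub_sin v θ
  have hintegrable : ∀ x y : ℝ, IntervalIntegrable
      (fun v => |sin v - sin θ| * (A + B * (c * sin v - d * cos v)) ^ 2) MeasureTheory.volume x y :=
    fun x y => Continuous.intervalIntegrable (by fun_prop) x y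
  have hftc : ∀ x y : ℝ,
      ∫ v in x..y, (sin v - sin θ) * (A + B * (c * sin v - d * cos v)) ^ 2 =
        primitiveAux (sin θ) A B c d y - primitiveAux (sin θ) A B c d x := fun x y =>
    intervalIntegral.integral_eq_sub_of_hasDerivAt
      (fun v _ => hasDerivAt_primitiveAux _ _ _ _ _ v)
      (Continuous.intervalIntegrable (by fun_prop) x y)
  have hpos : ∫ v in θ..(π - θ), |sin v - sin θ| * (A + B * (c * sin v - d * cos v)) ^ 2 =
      ∫ v in θ..(π - θ), (sin v - sin θ) * (A + B * (c * sin v - d * cos v)) ^ 2 := by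
    refine intervalIntegral.integral_congr fun v hv => ?_
    rw [Set.uIcc_of_le (by linarith)] at hv
    have : 0 ≤ sin v - sin θ := by
      rw [hfac]
      have := sin_nonneg_of_nonneg_of_le_pi (x := (v - θ) / 2)
        (by linarith [hv.1]) (by linarith [hv.2])
      have := cos_nonneg_of_neg_pi_div_two_le_of_le (x := (v + θ) / 2)
        (by linarith [hv.1]) (by linarith [hv.2])
      positivity
    simp only [abs_of_nonneg this]
  have hneg : ∫ v in (π - θ)..(θ + 2 * π),
        |sin v - sin θ| * (A + B * (c * sin v - d * cos v)) ^ 2 =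
      -∫ v in (π - θ)..(θ + 2 * π),
        (sin v - sin θ) * (A + B * (c * sin v - d * cos v)) ^ 2 := by
    rw [← intervalIntegral.integral_neg]
    refine intervalIntegral.integral_congr fun v hv => ?_
    rw [Set.uIcc_of_le (by linarith)] at hv
    have : sin v - sin θ ≤ 0 := by
      rw [hfac]
      have h3 := sin_nonneg_of_nonneg_of_le_pi (x := (v - θ) / 2)
        (by linarith [hv.1]) (by linarith [hv.2])
      have h4 := cos_nonpos_of_pi_div_two_le_of_le (x := (v + θ) / 2)
        (by linarith [hv.1]) (by linarith [hv.2])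
      exact mul_nonpos_of_nonneg_of_nonpos (by positivity) h4
    simp only [abs_of_nonpos this]
    ring
  rw [← intervalIntegral.integral_add_adjacent_intervals (hintegrable θ (π - θ)) (hintegrable _ _),
    hpos, hneg, hftc, hftc]
  simp only [primitiveAux, sin_pi_sub, cos_pi_sub, sin_add_two_pi, cos_add_two_pi]
  ring

/-- The shift `v = b + t + π / 2`, followed by a change of the period interval. -/
lemma integral_shift {r t θ : ℝ} (hθ : sin θ = 2 * r / 3 * cos t) :
    ∫ b in (-π)..π, |6 * cos (b + t) - 4 * r * cos t| *
        (1 + r ^ 2 + 2 * r * cos b) ^ 2 / (1 - r ^ 2) =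
      6 / (1 - r ^ 2) * ∫ v in θ..(θ + 2 * π), |sin v - sin θ| *
        ((1 + r ^ 2) + 2 * r * (cos t * sin v - sin t * cos v)) ^ 2 := by
  set g : ℝ → ℝ := fun v => |sin v - sin θ| *
    ((1 + r ^ 2) + 2 * r * (cos t * sin v - sin t * cos v)) ^ 2 with hg
  have hper : Function.Periodic g (2 * π) := fun v => by
    simp only [hg, sin_add_two_pi, cos_add_two_pi]
  have hfg : ∀ b, |6 * cos (b + t) - 4 * r * cos t| *
      (1 + r ^ 2 + 2 * r * cos b) ^ 2 / (1 - r ^ 2) = 6 / (1 - r ^ 2) * g (b + (t + π / 2)) := by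
    intro b
    have e1 : sin (b + (t + π / 2)) = cos (b + t) := by
      rw [← add_assoc, sin_add_pi_div_two]
    have e2 : cos (b + (t + π / 2)) = -sin (b + t) := by
      rw [← add_assoc, cos_add_pi_div_two]
    have e3 : cos b = cos t * cos (b + t) - sin t * -sin (b + t) := by
      have h := cos_sub (b + t) t
      rw [add_sub_cancel_right] at h
      rw [h]; ring
    have e4 : 6 * cos (b + t) - 4 * r * cos t = 6 * (cos (b + t) - sin θ) := by
      rw [hθ]; ring
    simp only [hg, e1, e2, ← e3]
    rw [e4, abs_mul, abs_of_pos (by norm_num : (0 : ℝ) < 6)]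
    ring
  simp only [hfg]
  rw [intervalIntegral.integral_const_mul,
    intervalIntegral.integral_comp_add_right (fun v => g v) (t + π / 2),
    ← hper.intervalIntegral_add_eq (-π + (t + π / 2)) θ]
  congr 2
  ring

/-- `s`, `a`, `θ` stand for the cosine and sine of the angle and the angle itself, and `c`, `d` for
`cos t` and `sin t`; the right-hand side is the value of the left-hand side at `t = π / 2`. -/
lemma closed_form_le {r s a θ c d : ℝ} (hr0 : 0 ≤ r) (hr1 : r < 1) (hs : 0 ≤ s)
    (has : a ^ 2 + s ^ 2 = 1) (hcd : d ^ 2 + c ^ 2 = 1) (hac : a = 2 * r / 3 * c)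
    (hθ : a ^ 2 ≤ θ * a) :
    ((1 + r ^ 2) ^ 2 + (2 * r) ^ 2 * d ^ 2) * (4 * s + 4 * θ * a)
      - 4 * (1 + r ^ 2) * (2 * r) * c * (θ + a * s)
      + (2 * r) ^ 2 * (c ^ 2 - d ^ 2) *
        (4 * s - 4 / 3 * s ^ 3 + 2 * θ * a - 2 * a ^ 2 * s) ≤
      4 * (1 + r ^ 2) ^ 2 + 4 / 3 * (2 * r) ^ 2 := by
  have hc : 2 * r * c = 3 * a := by rw [hac]; ring
  have hc2 : (2 * r) ^ 2 * c ^ 2 = 9 * a ^ 2 := by rw [← mul_pow, hc]; ring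
  have hd2 : (2 * r) ^ 2 * d ^ 2 = 4 * r ^ 2 - 9 * a ^ 2 := by
    rw [show d ^ 2 = 1 - c ^ 2 by linarith, mul_sub, hc2]; ring
  have ha2 : a ^ 2 = (1 - s) * (1 + s) := by linarith
  have hs1 : s ≤ 1 := by nlinarith [sq_nonneg a]
  obtain ⟨q, hq⟩ : ∃ q, q = r ^ 2 := ⟨_, rfl⟩
  have hq0 : 0 ≤ q := hq ▸ sq_nonneg r
  have hq1 : q ≤ 1 := by rw [hq]; nlinarith
  have hcoef : 2 * (q + 2) * (q - 1) * (θ * a - a ^ 2) ≤ 0 :=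
    mul_nonpos_of_nonpos_of_nonneg
      (mul_nonpos_of_nonneg_of_nonpos (by linarith) (by linarith)) (by linarith)
  have hpoly : 2 * (1 + q) ^ 2 * s - 6 * (1 + q) * (1 + s) ^ 2
      + 4 * q * (s ^ 2 + 4 * s + 1) / 3 + 6 * s ^ 3 * (1 + s) ≤ 0 := by
    have h2 : s ^ 2 ≤ s := by nlinarith
    have h3 : s ^ 3 * (1 + s) ≤ 2 * s ^ 2 := by
      nlinarith [mul_nonneg (sq_nonneg s) (mul_nonneg (sub_nonneg.2 hs1) (by linarith : 0 ≤ 2 + s))]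
    have h4 : q ^ 2 * s ≤ q * s := by nlinarith [mul_nonneg (mul_nonneg hq0 hs) (sub_nonneg.2 hq1)]
    nlinarith [mul_nonneg hq0 hs, mul_nonneg hq0 (sq_nonneg s)]
  have hfin := mul_nonpos_of_nonneg_of_nonpos (sub_nonneg.2 hs1) hpoly
  have key : ((1 + r ^ 2) ^ 2 + (2 * r) ^ 2 * d ^ 2) * (4 * s + 4 * θ * a)
      - 4 * (1 + r ^ 2) * (2 * r) * c * (θ + a * s)
      + (2 * r) ^ 2 * (c ^ 2 - d ^ 2) *
        (4 * s - 4 / 3 * s ^ 3 + 2 * θ * a - 2 * a ^ 2 * s)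
      - (4 * (1 + r ^ 2) ^ 2 + 4 / 3 * (2 * r) ^ 2)
      = 2 * (2 * (q + 2) * (q - 1) * (θ * a - a ^ 2))
        + 2 * ((1 - s) * (2 * (1 + q) ^ 2 * s - 6 * (1 + q) * (1 + s) ^ 2
      + 4 * q * (s ^ 2 + 4 * s + 1) / 3 + 6 * s ^ 3 * (1 + s))) := by
    rw [show 4 * (1 + r ^ 2) * (2 * r) * c = 4 * (1 + r ^ 2) * (2 * r * c) by ring,
      mul_sub ((2 * r) ^ 2) (c ^ 2),
      hc, hc2, hd2, ← hq]
    rw [show (2 * r) ^ 2 = 4 * q by rw [hq]; ring]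
    rw [show 4 * (1 + q) * (3 * a) * (θ + a * s) = (θ * a + a ^ 2 * s) * (12 * (1 + q)) by ring,
      show 4 * θ * a = 4 * (θ * a) by ring, show 2 * θ * a = 2 * (θ * a) by ring, ha2]
    ring
  linarith

theorem Phi_max_alpha_four
    (r : ℝ) (hr : r ∈ Set.Ico (0 : ℝ) 1)
    (Φ : ℝ → ℝ)
    (hΦ : ∀ t : ℝ, Φ t =
      ∫ b in (-π)..π,
        |6 * Real.cos (b + t) - 4 * r * Real.cos t| *
          (1 + r ^ 2 + 2 * r * Real.cos b) ^ 2 / (1 - r ^ 2)) :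
    ∀ t : ℝ, Φ t ≤ Φ (π / 2) := by
  intro t
  obtain ⟨hr0, hr1⟩ := hr
  have hpi := pi_pos
  have habs : |2 * r / 3 * cos t| ≤ 1 := by
    rw [abs_mul, abs_of_nonneg (by positivity)]
    nlinarith [abs_cos_le_one t, abs_nonneg (cos t)]
  obtain ⟨hl, hu⟩ := abs_le.1 habs
  obtain ⟨θ, hθ⟩ : ∃ θ, θ = arcsin (2 * r / 3 * cos t) := ⟨_, rfl⟩
  have hsin : sin θ = 2 * r / 3 * cos t := by rw [hθ, sin_arcsin hl hu]
  have h1 : -(π / 2) ≤ θ := hθ ▸ neg_pi_div_two_le_arcsin _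
  have h2 : θ ≤ π / 2 := hθ ▸ arcsin_le_pi_div_two _
  have hθa : sin θ ^ 2 ≤ θ * sin θ := by
    rcases le_total 0 θ with h | h
    · nlinarith [sin_le h, sin_nonneg_of_nonneg_of_le_pi h (by linarith)]
    · nlinarith [le_sin h, sin_nonpos_of_nonpos_of_neg_pi_le h (by linarith)]
  rw [hΦ t, hΦ (π / 2), integral_shift hsin, integral_shift (t := π / 2) (θ := 0) (by simp),
    integral_abs_sin_sub h1 h2, integral_abs_sin_sub (by linarith) (by linarith)]
  have hq : 0 < 1 - r ^ 2 := by nlinarith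
  refine mul_le_mul_of_nonneg_left ?_ (by positivity)
  refine (closed_form_le hr0 hr1 (cos_nonneg_of_neg_pi_div_two_le_of_le h1 h2)
    (sin_sq_add_cos_sq θ) (sin_sq_add_cos_sq t) hsin hθa).trans_eq ?_
  simp only [sin_zero, cos_zero, sin_pi_div_two, cos_pi_div_two]
  ring
end

section
/- Let q ≥ 1, α ≥ 0, r ∈ [0,1], and η, b ∈ ℝ. Then |α r cos η − (2+α) cos(b+η)|^q ≤ (2+α)^q |cos(b+η)|^q + q (2(1+α))^{q−1} α r. -/
/-!
Let `A` be the absolute value on the left and `B = (2 + α) |cos (b + η)|`. The triangle inequality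
gives `A ≤ B + α r`, and since `B ≤ 2 + α` and `r ≤ 1` also `A ≤ 2 (1 + α)`. If `A ≤ B`, the claim
is monotonicity of `t ↦ t ^ q`; otherwise convexity (`rpow_le_rpow_add_tangent`) gives
`A ^ q - B ^ q ≤ q A ^ (q - 1) (A - B) ≤ q (2 (1 + α)) ^ (q - 1) α r`.
-/

open Real

/-- The tangent line of the convex function `t ↦ t ^ q` at `A` lies below its graph at `B`;
this is Bernoulli's inequality for `B / A`, multiplied by `A ^ q`. -/
theorem rpow_le_rpow_add_tangent {A B q : ℝ} (hq : 1 ≤ q) (hA : 0 < A) (hB : 0 ≤ B) :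
    A ^ q ≤ B ^ q + q * A ^ (q - 1) * (A - B) := by
  have hs : -1 ≤ B / A - 1 := by linarith [div_nonneg hB hA.le]
  have h := one_add_mul_self_le_rpow_one_add hs hq
  rw [add_sub_cancel, div_rpow hB hA.le, le_div_iff₀ (rpow_pos_of_pos hA q)] at h
  have e : A ^ q = A ^ (q - 1) * A := by
    rw [← rpow_add_one hA.ne', sub_add_cancel]
  have e2 : (1 + q * (B / A - 1)) * A ^ q = A ^ q - q * A ^ (q - 1) * (A - B) := by
    rw [e]
    field_simp
    ring
  linarith

theorem cos_power_pointwise_estimate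
    (q α r η b : ℝ) (hq : 1 ≤ q) (hα : 0 ≤ α) (hr : r ∈ Set.Icc (0 : ℝ) 1) :
    |α * r * Real.cos η - (2 + α) * Real.cos (b + η)| ^ q ≤
      (2 + α) ^ q * |Real.cos (b + η)| ^ q + q * (2 * (1 + α)) ^ (q - 1) * α * r := by
  obtain ⟨hr0, hr1⟩ := hr
  have h2 : (0 : ℝ) ≤ 2 + α := by linarith
  have har : 0 ≤ α * r := mul_nonneg hα hr0
  rw [← mul_rpow h2 (abs_nonneg _)]
  have hB : 0 ≤ (2 + α) * |cos (b + η)| := by positivity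
  have hBle : (2 + α) * |cos (b + η)| ≤ 2 + α :=
    mul_le_of_le_one_right h2 (abs_cos_le_one _)
  have hAB : |α * r * cos η - (2 + α) * cos (b + η)| ≤ α * r + (2 + α) * |cos (b + η)| := by
    refine (abs_sub _ _).trans ?_
    rw [abs_mul, abs_mul (2 + α), abs_of_nonneg har, abs_of_nonneg h2]
    linarith [mul_le_of_le_one_right har (abs_cos_le_one η)]
  have hA0 := abs_nonneg (α * r * cos η - (2 + α) * cos (b + η))
  generalize |α * r * cos η - (2 + α) * cos (b + η)| = A at *
  generalize (2 + α) * |cos (b + η)| = B at *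
  have hA2 : A ≤ 2 * (1 + α) := by linarith [mul_le_of_le_one_right hα hr1]
  have hq0 : 0 ≤ q := by linarith
  rcases le_or_gt A B with h | h
  · have h1 := rpow_le_rpow hA0 h hq0
    have h3 : 0 ≤ q * (2 * (1 + α)) ^ (q - 1) * α * r := by positivity
    linarith
  · have h1 := rpow_le_rpow_add_tangent hq (hB.trans_lt h) hB
    have h3 : A ^ (q - 1) ≤ (2 * (1 + α)) ^ (q - 1) := rpow_le_rpow hA0 hA2 (by linarith)
    have h4 : q * A ^ (q - 1) * (A - B) ≤ q * (2 * (1 + α)) ^ (q - 1) * (α * r) := by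
      gcongr
      linarith
    linarith
end

section
/- Let m ∈ ℝ and r ∈ [0,1). Then (1/2π)∫₀^{2π} (1+r²+2r cos s)^m ds = (1+r²)^m · Σ_{k=0}^∞ [ (1/2 − m/2)_k (−m/2)_k / ( (1)_k · k! ) ] · ( 4r²/(1+r²)² )^k, i.e. the integral equals (1+r²)^m · ₂F₁(1/2 − m/2, −m/2; 1; 4r²/(1+r²)²). -/
/-!
Put `z = 2r/(1+r²)`, so that `0 ≤ z < 1` and `1 + r² + 2r cos s = (1+r²)(1 + z cos s)`. Since
`|z cos s| ≤ z < 1`, the binomial series `(1 + z cos s)^m = ∑ₙ C(m,n) zⁿ cosⁿ s` is dominated,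
uniformly in `s`, by the convergent series `∑ₙ |C(m,n)| zⁿ`, and may be integrated term by term.
The odd moments of `cos` over a period vanish and the even ones are given by the Wallis product
`∏_{i<k} (2i+1)/(2i+2)`. What remains, proved by induction on `k` in `choose_mul_wallis`, is that
`C(m,2k) · ∏_{i<k} (2i+1)/(2i+2)` is the hypergeometric coefficient of `(z²)^k`.
-/

open Real

/-- The Pochhammer symbol `(y)_k = y (y+1) ⋯ (y+k-1)`. -/
noncomputable def poch (y : ℝ) (k : ℕ) : ℝ := ∏ i ∈ Finset.range k, (y + i)

lemma choose_succ_right (m : ℝ) (n : ℕ) :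
    Ring.choose m (n + 1) = Ring.choose m n * ((m - n) / (n + 1)) := by
  have h : (n : ℝ) + 1 ≠ 0 := by positivity
  rw [Ring.choose_eq_smul, Ring.choose_eq_smul, descPochhammer_succ_right, Polynomial.smeval_mul,
    Nat.factorial_succ]
  have h2 : ((n.factorial : ℕ) : ℝ) ≠ 0 := by positivity
  simp only [Polynomial.smeval_sub, Polynomial.smeval_X, Polynomial.smeval_natCast, smul_eq_mul]
  push_cast
  simp
  field_simp

lemma integral_cos_pow_odd_period (k : ℕ) :
    ∫ s in (0 : ℝ)..(2 * π), Real.cos s ^ (2 * k + 1) = 0 := by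
  induction k with
  | zero => simp
  | succ k ih =>
    rw [show 2 * (k + 1) + 1 = (2 * k + 1) + 2 by ring, integral_cos_pow, ih]
    simp

lemma integral_cos_pow_even_period (k : ℕ) :
    ∫ s in (0 : ℝ)..(2 * π), Real.cos s ^ (2 * k) =
      2 * π * ∏ i ∈ Finset.range k, (2 * (i : ℝ) + 1) / (2 * i + 2) := by
  induction k with
  | zero => simp
  | succ k ih =>
    rw [show 2 * (k + 1) = 2 * k + 2 by ring, integral_cos_pow, ih, Finset.prod_range_succ]
    simp
    ring

lemma poch_succ (y : ℝ) (k : ℕ) : poch y (k + 1) = poch y k * (y + k) := by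
  simp [poch, Finset.prod_range_succ]

lemma poch_one_pos (k : ℕ) : 0 < poch 1 k :=
  Finset.prod_pos fun i _ => by positivity

/-- The even binomial coefficients, weighted by the mean of `cos ^ (2 * k)`, are the coefficients
of the hypergeometric series: passing from `k` to `k + 1` multiplies both sides by
`(m - 2k)(m - 2k - 1) / (2k + 2)²`. -/
lemma choose_mul_wallis (m : ℝ) (k : ℕ) :
    Ring.choose m (2 * k) * ∏ i ∈ Finset.range k, (2 * (i : ℝ) + 1) / (2 * i + 2) =
      poch (1 / 2 - m / 2) k * poch (-(m / 2)) k / (poch 1 k * (Nat.factorial k : ℝ)) := by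
  induction k with
  | zero => simp [poch]
  | succ k ih =>
    rw [show 2 * (k + 1) = 2 * k + 1 + 1 by ring, choose_succ_right, choose_succ_right,
      Finset.prod_range_succ, poch_succ, poch_succ, poch_succ, Nat.factorial_succ]
    have h1 := (poch_one_pos k).ne'
    have h2 : ((k.factorial : ℕ) : ℝ) ≠ 0 := by positivity
    have h3 : (k : ℝ) + 1 ≠ 0 := by positivity
    have h4 : 2 * (k : ℝ) + 1 ≠ 0 := by positivity
    have h5 : 1 + (k : ℝ) ≠ 0 := by positivity
    have h6 : 2 * (k : ℝ) + 1 + 1 ≠ 0 := by positivity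
    have h7 : 2 * (k : ℝ) + 2 ≠ 0 := by positivity
    push_cast
    calc _ = (Ring.choose m (2 * k) *
          ∏ i ∈ Finset.range k, (2 * (i : ℝ) + 1) / (2 * i + 2)) *
          ((m - 2 * k) / (2 * k + 1) * ((m - (2 * k + 1)) / (2 * k + 1 + 1)) *
            ((2 * k + 1) / (2 * k + 2))) := by ring
      _ = _ := by
        rw [ih]
        field_simp
        ring

/-- The real binomial series, extracted from the power series expansion of `(1 + x) ^ m` at `0`. -/
lemma hasSum_choose_mul_pow (m : ℝ) {x : ℝ} (hx : |x| < 1) :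
    HasSum (fun n : ℕ => Ring.choose m n * x ^ n) ((1 + x) ^ m) := by
  have hmem : x ∈ Metric.eball (0 : ℝ) 1 := by
    rw [← ENNReal.ofReal_one, Metric.eball_ofReal]
    simpa using hx
  simpa [binomialSeries, FormalMultilinearSeries.coeff_ofScalars, mul_comm] using
    (Real.one_add_rpow_hasFPowerSeriesOnBall_zero (a := m)).hasSum hmem

lemma summable_abs_choose_mul_pow (m : ℝ) {x : ℝ} (h0 : 0 ≤ x) (hx : x < 1) :
    Summable (fun n : ℕ => |Ring.choose m n| * x ^ n) := by
  have h := (hasSum_choose_mul_pow m (x := x) (by rwa [abs_of_nonneg h0])).summable.abs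
  simpa [abs_mul, abs_of_nonneg h0] using h

lemma hasSum_integral_one_add_mul_cos_rpow (m : ℝ) {z : ℝ} (h0 : 0 ≤ z) (hz : z < 1) :
    HasSum (fun n : ℕ => Ring.choose m n * z ^ n * ∫ s in (0 : ℝ)..(2 * π), Real.cos s ^ n)
      (∫ s in (0 : ℝ)..(2 * π), (1 + z * Real.cos s) ^ m) := by
  have hle : ∀ s, |z * Real.cos s| ≤ z := fun s => by
    rw [abs_mul, abs_of_nonneg h0]
    exact mul_le_of_le_one_right h0 (Real.abs_cos_le_one s)
  have key := intervalIntegral.hasSum_integral_of_dominated_convergence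
    (a := 0) (b := 2 * π) (μ := MeasureTheory.volume)
    (F := fun (n : ℕ) s => Ring.choose m n * (z * Real.cos s) ^ n)
    (f := fun s => (1 + z * Real.cos s) ^ m)
    (fun n _ => |Ring.choose m n| * z ^ n)
    (fun n => (by fun_prop : Continuous fun s : ℝ =>
      Ring.choose m n * (z * Real.cos s) ^ n).aestronglyMeasurable)
    (fun n => .of_forall fun s _ => by
      rw [norm_mul, norm_pow, Real.norm_eq_abs, Real.norm_eq_abs]
      gcongr
      exact hle s)
    (.of_forall fun s _ => summable_abs_choose_mul_pow m h0 hz)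
    intervalIntegrable_const
    (.of_forall fun s _ => hasSum_choose_mul_pow m ((hle s).trans_lt hz))
  simpa only [mul_pow, ← mul_assoc, intervalIntegral.integral_const_mul] using key

theorem integral_eq_hypergeometric
    (m r : ℝ) (hr : r ∈ Set.Ico (0 : ℝ) 1) :
    (1 / (2 * π)) * ∫ s in (0 : ℝ)..(2 * π), (1 + r ^ 2 + 2 * r * Real.cos s) ^ m =
      (1 + r ^ 2) ^ m *
        ∑' k : ℕ,
          (poch (1 / 2 - m / 2) k * poch (-(m / 2)) k / (poch 1 k * (Nat.factorial k : ℝ))) *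
            (4 * r ^ 2 / (1 + r ^ 2) ^ 2) ^ k := by
  obtain ⟨hr0, hr1⟩ := hr
  have hpos : 0 < 1 + r ^ 2 := by positivity
  set z : ℝ := 2 * r / (1 + r ^ 2) with hz
  have hz0 : 0 ≤ z := by positivity
  have hz1 : z < 1 := by
    rw [hz, div_lt_one hpos]
    nlinarith [mul_pos (sub_pos.2 hr1) (sub_pos.2 hr1)]
  have hint : ∫ s in (0 : ℝ)..(2 * π), (1 + r ^ 2 + 2 * r * Real.cos s) ^ m =
      (1 + r ^ 2) ^ m * ∫ s in (0 : ℝ)..(2 * π), (1 + z * Real.cos s) ^ m := by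
    rw [← intervalIntegral.integral_const_mul]
    congr 1
    funext s
    have hnn : 0 ≤ 1 + z * Real.cos s := by nlinarith [Real.neg_one_le_cos s]
    rw [← Real.mul_rpow hpos.le hnn]
    congr 1
    rw [hz]
    field_simp
  have hsum := hasSum_integral_one_add_mul_cos_rpow m hz0 hz1
  -- Only the even indices contribute.
  have hinj : Function.Injective (fun k : ℕ => 2 * k) := fun a b h => by
    simpa using h
  rw [← hinj.hasSum_iff] at hsum
  · have hx : 4 * r ^ 2 / (1 + r ^ 2) ^ 2 = z ^ 2 := by
      rw [hz, div_pow]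
      ring
    rw [hint, ← hsum.tsum_eq, mul_left_comm, ← tsum_mul_left, hx]
    congr 2
    funext k
    have hπ := Real.pi_ne_zero
    simp only [Function.comp_apply]
    rw [← choose_mul_wallis, integral_cos_pow_even_period, pow_mul]
    field_simp
  · intro n hn
    rcases Nat.even_or_odd' n with ⟨k, rfl | rfl⟩
    · exact absurd ⟨k, rfl⟩ hn
    · rw [integral_cos_pow_odd_period, mul_zero]
end

section
/- Let α > −1, r ∈ [0,1), and let u* : [0,2π] → ℝ be a measurable function with |u*(t)| ≤ 1 for almost every t and ∫₀^{2π} u*(t) dt = 0. Then ∫_{π}^{2π} (1 + u*(t)) (1+r² − 2r sin t)^{−1−α/2} dt ≤ ∫₀^{π} (1 − u*(t)) (1+r² − 2r sin t)^{−1−α/2} dt. -/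
/-!
The kernel `(1 + r² - 2 r sin t) ^ (-1 - α/2)` has a negative exponent, so it is at least
`C = (1 + r²) ^ (-1 - α/2)` on the upper half circle, where `sin t ≥ 0`, and at most `C` on the
lower half circle. The weights `1 ± u*` are nonnegative, so both sides compare with `C` times
the integral of the weight; since `u*` has mean zero, these two integrals
`∫_π^{2π} (1 + u*)` and `∫_0^π (1 - u*)` agree.
-/

open Real

theorem halfcircle_integral_comparison
    (α r : ℝ) (hα : -1 < α) (hr : r ∈ Set.Ico (0 : ℝ) 1)
    (ustar : ℝ → ℝ) (hmeas : Measurable ustar)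
    (hbd : ∀ᵐ t ∂(MeasureTheory.volume.restrict (Set.Icc (0 : ℝ) (2 * π))), |ustar t| ≤ 1)
    (hmean : ∫ t in (0 : ℝ)..(2 * π), ustar t = 0) :
    (∫ t in π..(2 * π), (1 + ustar t) * (1 + r ^ 2 - 2 * r * Real.sin t) ^ (-1 - α / 2)) ≤
      ∫ t in (0 : ℝ)..π, (1 - ustar t) * (1 + r ^ 2 - 2 * r * Real.sin t) ^ (-1 - α / 2) := by
  obtain ⟨hr0, hr1⟩ := hr
  have hpi := Real.pi_pos
  set s : ℝ := -1 - α / 2 with hs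
  have hs0 : s ≤ 0 := by rw [hs]; linarith
  have hpos : ∀ t, 0 < 1 + r ^ 2 - 2 * r * Real.sin t := fun t => by
    nlinarith [Real.sin_le_one t, mul_nonneg hr0 (sub_nonneg.2 (Real.sin_le_one t)),
      pow_pos (sub_pos.2 hr1) 2]
  have hcont : Continuous fun t => (1 + r ^ 2 - 2 * r * Real.sin t) ^ s :=
    Continuous.rpow_const (by fun_prop) fun t => Or.inl (hpos t).ne'
  have hint : IntervalIntegrable ustar MeasureTheory.volume 0 (2 * π) := by
    rw [intervalIntegrable_iff_integrableOn_Icc_of_le (by positivity)]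
    exact MeasureTheory.Integrable.of_bound hmeas.aestronglyMeasurable 1 hbd
  have hint1 : IntervalIntegrable ustar MeasureTheory.volume 0 π :=
    hint.mono_set (by
      rw [Set.uIcc_of_le hpi.le, Set.uIcc_of_le (by positivity)]
      exact Set.Icc_subset_Icc le_rfl (by linarith))
  have hint2 : IntervalIntegrable ustar MeasureTheory.volume π (2 * π) :=
    hint.mono_set (by
      rw [Set.uIcc_of_le (by linarith), Set.uIcc_of_le (by positivity)]
      exact Set.Icc_subset_Icc hpi.le le_rfl)
  have hone : ∀ a b : ℝ, IntervalIntegrable (fun _ : ℝ => (1 : ℝ)) MeasureTheory.volume a b :=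
    fun a b => intervalIntegrable_const
  have hsplit := intervalIntegral.integral_add_adjacent_intervals hint1 hint2
  rw [hmean] at hsplit
  have hbd1 : ∀ᵐ t ∂(MeasureTheory.volume.restrict (Set.Icc (0 : ℝ) π)), |ustar t| ≤ 1 :=
    MeasureTheory.ae_restrict_of_ae_restrict_of_subset
      (Set.Icc_subset_Icc le_rfl (by linarith)) hbd
  have hbd2 : ∀ᵐ t ∂(MeasureTheory.volume.restrict (Set.Icc π (2 * π))), |ustar t| ≤ 1 :=
    MeasureTheory.ae_restrict_of_ae_restrict_of_subset
      (Set.Icc_subset_Icc hpi.le le_rfl) hbd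
  have hlower : (∫ t in π..(2 * π), (1 + ustar t) * (1 + r ^ 2 - 2 * r * Real.sin t) ^ s) ≤
      ∫ t in π..(2 * π), (1 + ustar t) * (1 + r ^ 2) ^ s := by
    refine intervalIntegral.integral_mono_ae_restrict (by linarith)
      (((hone _ _).add hint2).mul_continuousOn hcont.continuousOn)
      (((hone _ _).add hint2).mul_const _) ?_
    filter_upwards [hbd2, MeasureTheory.ae_restrict_mem measurableSet_Icc] with t ht hmem
    have hsin : Real.sin t ≤ 0 := by
      have h := Real.sin_nonneg_of_nonneg_of_le_pi (x := t - π) (by linarith [hmem.1])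
        (by linarith [hmem.2])
      rw [Real.sin_sub_pi] at h
      linarith
    refine mul_le_mul_of_nonneg_left ?_ (by linarith [(abs_le.1 ht).1])
    exact Real.rpow_le_rpow_of_nonpos (by positivity) (by nlinarith) hs0
  have hupper : (∫ t in (0 : ℝ)..π, (1 - ustar t) * (1 + r ^ 2) ^ s) ≤
      ∫ t in (0 : ℝ)..π, (1 - ustar t) * (1 + r ^ 2 - 2 * r * Real.sin t) ^ s := by
    refine intervalIntegral.integral_mono_ae_restrict hpi.le
      (((hone _ _).sub hint1).mul_const _)
      (((hone _ _).sub hint1).mul_continuousOn hcont.continuousOn) ?_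
    filter_upwards [hbd1, MeasureTheory.ae_restrict_mem measurableSet_Icc] with t ht hmem
    have hsin : 0 ≤ Real.sin t := Real.sin_nonneg_of_nonneg_of_le_pi hmem.1 hmem.2
    refine mul_le_mul_of_nonneg_left ?_ (by linarith [(abs_le.1 ht).2])
    exact Real.rpow_le_rpow_of_nonpos (hpos t) (by nlinarith) hs0
  refine hlower.trans (le_trans (le_of_eq ?_) hupper)
  rw [intervalIntegral.integral_mul_const, intervalIntegral.integral_mul_const,
    intervalIntegral.integral_add (hone _ _) hint2,
    intervalIntegral.integral_sub (hone _ _) hint1,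
    intervalIntegral.integral_const, intervalIntegral.integral_const]
  congr 1
  simp only [smul_eq_mul]
  linarith
end

section
/- Let α > −1 and r ∈ [0,1). Then (1/2π) [ ∫₀^{π} (1−r²)^{α+1} (1+r² − 2r sin t)^{−1−α/2} dt − ∫_{π}^{2π} (1−r²)^{α+1} (1+r² − 2r sin t)^{−1−α/2} dt ] = ( 2(2+α) r (1−r²)^{1+α} / ( π (1+r²)^{2+α/2} ) ) · Σ_{k=0}^∞ [ (1)_k (1+α/4)_k (3/2+α/4)_k / ( (3/2)_k (3/2)_k k! ) ] · ( 4r²/(1+r²)² )^k. -/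
/-!
Write `s = 1 + α/2`, `A = 1 + r²` and `c = 2r/A ∈ [0, 1)`. Translating the second integral by `π`
turns `sin t` into `-sin t`, so up to the factor `(1 - r²)^(α+1) A^(-s)` the left-hand side is the
integral over `[0, π]` of `(1 - c sin t)^(-s) - (1 + c sin t)^(-s)`. By the binomial series
(`hasSum_one_sub_rpow_neg`) this integrand is twice the odd part
`∑ (s)_{2k+1} / (2k+1)! (c sin t)^(2k+1)` (`hasSum_odd_part`), and its terms are dominated by their
values at `sin t = 1`, so integration may be carried out termwise (`hasSum_integral_odd_part`).
The coefficients are then identified with the Wallis integral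
`∫ sin^(2k+1) = 2 k! / (3/2)_k` (`integral_sin_pow_odd_poch`) and the two duplication formulas
`(s)_{2k+1} = s 4^k ((s+1)/2)_k ((s+2)/2)_k` (`poch_odd`) and
`(2k+1)! = 4^k k! (3/2)_k` (`factorial_odd`).
-/

open Real

lemma poch_zero (y : ℝ) : poch y 0 = 1 := Finset.prod_range_zero _

lemma poch_pos {y : ℝ} (hy : 0 < y) (k : ℕ) : 0 < poch y k :=
  Finset.prod_pos fun i _ => by positivity

lemma poch_one (k : ℕ) : poch 1 k = (k.factorial : ℝ) := by
  induction k with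
  | zero => simp [poch_zero]
  | succ k ih => rw [poch_succ, ih, Nat.factorial_succ]; push_cast; ring

lemma poch_eq_eval (y : ℝ) (k : ℕ) : poch y k = (ascPochhammer ℝ k).eval y := by
  induction k with
  | zero => simp [poch_zero]
  | succ k ih => rw [poch_succ, ih, ascPochhammer_succ_eval]

/-- Duplication formula for the Pochhammer symbol at an odd index. -/
lemma poch_odd (s : ℝ) (k : ℕ) :
    poch s (2 * k + 1) = s * 4 ^ k * poch ((s + 1) / 2) k * poch ((s + 2) / 2) k := by
  induction k with
  | zero => simp [poch_succ, poch_zero]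
  | succ k ih =>
    rw [show 2 * (k + 1) + 1 = 2 * k + 1 + 1 + 1 by ring, poch_succ, poch_succ, ih, poch_succ,
      poch_succ]
    push_cast
    ring

lemma factorial_odd (k : ℕ) :
    ((2 * k + 1).factorial : ℝ) = 4 ^ k * k.factorial * poch (3 / 2) k := by
  rw [← poch_one, poch_odd, ← poch_one k]
  norm_num

lemma integral_sin_pow_odd_poch (k : ℕ) :
    (∫ t in (0 : ℝ)..π, sin t ^ (2 * k + 1)) = 2 * k.factorial / poch (3 / 2) k := by
  rw [integral_sin_pow_odd, mul_div_assoc, ← poch_one, poch, poch, ← Finset.prod_div_distrib]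
  congr 1
  refine Finset.prod_congr rfl fun i _ => ?_
  rw [div_eq_div_iff (by positivity) (by positivity)]
  ring

lemma choose_eq_poch (s : ℝ) (n : ℕ) :
    Ring.choose (s + n - 1) n = poch s n / n.factorial := by
  rw [← Ring.multichoose_eq, eq_div_iff (by positivity), poch_eq_eval,
    ← Polynomial.ascPochhammer_smeval_eq_eval,
    ← Ring.factorial_nsmul_multichoose_eq_ascPochhammer, nsmul_eq_mul, mul_comm]

/-- The binomial series for a negative exponent, with coefficients in Pochhammer form. -/
lemma hasSum_one_sub_rpow_neg (s : ℝ) {x : ℝ} (hx : |x| < 1) :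
    HasSum (fun n : ℕ => poch s n / n.factorial * x ^ n) ((1 - x) ^ (-s)) := by
  have h := (Real.one_div_one_sub_rpow_hasFPowerSeriesOnBall_zero s).hasSum (y := x)
    (by simpa [enorm_eq_nnnorm, ← NNReal.coe_lt_coe] using hx)
  have hx' : 0 ≤ 1 - x := by linarith [(abs_lt.mp hx).2]
  simpa only [FormalMultilinearSeries.ofScalars_apply_eq, smul_eq_mul, zero_add, choose_eq_poch,
    one_div, ← Real.rpow_neg hx'] using h

lemma hasSum_odd_part (s : ℝ) {x : ℝ} (hx : |x| < 1) :
    HasSum (fun k : ℕ => 2 * (poch s (2 * k + 1) / (2 * k + 1).factorial) * x ^ (2 * k + 1))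
      ((1 - x) ^ (-s) - (1 + x) ^ (-s)) := by
  have h := (hasSum_one_sub_rpow_neg s hx).sub
    (hasSum_one_sub_rpow_neg s (x := -x) (by rwa [abs_neg]))
  rw [sub_neg_eq_add] at h
  have hinj : Function.Injective fun k : ℕ => 2 * k + 1 := fun a b hab => by
    simp only at hab; omega
  rw [← hinj.hasSum_iff] at h
  · refine (congrArg (HasSum · _) (funext fun k => ?_)).mpr h
    simp only [Function.comp, Odd.neg_pow (odd_two_mul_add_one k)]
    ring
  · intro n hn
    -- the even terms cancel
    rcases Nat.even_or_odd n with he | ⟨m, hm⟩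
    · simp [he.neg_pow]
    · exact absurd ⟨m, hm.symm⟩ hn

lemma hasSum_integral_odd_part {s c : ℝ} (hs : 0 < s) (hc0 : 0 ≤ c) (hc1 : c < 1) :
    HasSum (fun k : ℕ => 2 * (poch s (2 * k + 1) / (2 * k + 1).factorial) * c ^ (2 * k + 1) *
        (2 * k.factorial / poch (3 / 2) k))
      (∫ t in (0 : ℝ)..π, ((1 - c * sin t) ^ (-s) - (1 + c * sin t) ^ (-s))) := by
  have hb : ∀ t, |c * sin t| ≤ c := fun t => by
    rw [abs_mul, abs_of_nonneg hc0]
    exact mul_le_of_le_one_right hc0 (abs_sin_le_one t)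
  have key := intervalIntegral.hasSum_integral_of_dominated_convergence
    (μ := MeasureTheory.volume) (a := 0) (b := π)
    (F := fun (k : ℕ) t =>
      2 * (poch s (2 * k + 1) / (2 * k + 1).factorial) * (c * sin t) ^ (2 * k + 1))
    (f := fun t => (1 - c * sin t) ^ (-s) - (1 + c * sin t) ^ (-s))
    (fun k _ => 2 * (poch s (2 * k + 1) / (2 * k + 1).factorial) * c ^ (2 * k + 1))
    (fun k => Continuous.aestronglyMeasurable (by fun_prop))
    (fun k => .of_forall fun t _ => ?_)
    (.of_forall fun t _ => (hasSum_odd_part s (by rwa [abs_of_nonneg hc0])).summable)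
    intervalIntegrable_const
    (.of_forall fun t _ => hasSum_odd_part s ((hb t).trans_lt hc1))
  · refine (congrArg (HasSum · _) (funext fun k => ?_)).mpr key
    simp only [mul_pow, ← mul_assoc]
    rw [intervalIntegral.integral_const_mul, integral_sin_pow_odd_poch]
  · have := poch_pos hs (2 * k + 1)
    rw [norm_mul, norm_pow, Real.norm_eq_abs, Real.norm_eq_abs, abs_of_nonneg (by positivity)]
    gcongr
    exact hb t

theorem step_function_extension_eq_hypergeometric
    (α r : ℝ) (hα : -1 < α) (hr : r ∈ Set.Ico (0 : ℝ) 1) :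
    (1 / (2 * π)) *
        ((∫ t in (0 : ℝ)..π,
            (1 - r ^ 2) ^ (α + 1) * (1 + r ^ 2 - 2 * r * Real.sin t) ^ (-1 - α / 2)) -
          ∫ t in π..(2 * π),
            (1 - r ^ 2) ^ (α + 1) * (1 + r ^ 2 - 2 * r * Real.sin t) ^ (-1 - α / 2)) =
      (2 * (2 + α) * r * (1 - r ^ 2) ^ (1 + α) / (π * (1 + r ^ 2) ^ (2 + α / 2))) *
        ∑' k : ℕ,
          (poch 1 k * poch (1 + α / 4) k * poch (3 / 2 + α / 4) k /
              (poch (3 / 2) k * poch (3 / 2) k * (Nat.factorial k : ℝ))) *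
            (4 * r ^ 2 / (1 + r ^ 2) ^ 2) ^ k := by
  obtain ⟨hr0, hr1⟩ := hr
  set s : ℝ := 1 + α / 2 with hs_def
  have hs : 0 < s := by linarith
  set A : ℝ := 1 + r ^ 2 with hA_def
  have hA : 0 < A := by positivity
  set c : ℝ := 2 * r / A with hc_def
  have hc0 : 0 ≤ c := by positivity
  have hc1 : c < 1 := by
    rw [hc_def, div_lt_one hA]
    nlinarith [mul_pos (sub_pos.mpr hr1) (sub_pos.mpr hr1)]
  have hcA : A * c = 2 * r := by rw [hc_def]; field_simp
  -- `1 - c u` stays positive for `|u| ≤ 1`, which also handles `1 + c u`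
  have hpos : ∀ u : ℝ, |u| ≤ 1 → 0 < 1 - c * u := fun u hu => by
    have : c * u ≤ c := mul_le_of_le_one_right hc0 (abs_le.mp hu).2
    linarith
  have hpos' : ∀ t, 0 < 1 + c * sin t := fun t => by
    simpa using hpos (-sin t) (by rw [abs_neg]; exact abs_sin_le_one t)
  have hfac : ∀ u : ℝ, |u| ≤ 1 →
      (A - 2 * r * u) ^ (-1 - α / 2) = A ^ (-s) * (1 - c * u) ^ (-s) := fun u hu => by
    rw [← Real.mul_rpow hA.le (hpos u hu).le, mul_sub, ← mul_assoc, hcA, mul_one, hs_def, neg_add']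
  have hshift : (∫ t in π..(2 * π),
      (1 - r ^ 2) ^ (α + 1) * (A - 2 * r * sin t) ^ (-1 - α / 2)) =
      ∫ t in (0 : ℝ)..π, (1 - r ^ 2) ^ (α + 1) * (A ^ (-s) * (1 + c * sin t) ^ (-s)) := by
    have h := intervalIntegral.integral_comp_add_right (a := 0) (b := π)
      (fun t => (1 - r ^ 2) ^ (α + 1) * (A - 2 * r * sin t) ^ (-1 - α / 2)) π
    rw [zero_add, ← two_mul] at h
    rw [← h]
    refine intervalIntegral.integral_congr fun t _ => ?_
    simp only [sin_add_pi]
    rw [hfac _ (by rw [abs_neg]; exact abs_sin_le_one t), mul_neg, sub_neg_eq_add]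
  have hfirst : (∫ t in (0 : ℝ)..π,
      (1 - r ^ 2) ^ (α + 1) * (A - 2 * r * sin t) ^ (-1 - α / 2)) =
      ∫ t in (0 : ℝ)..π, (1 - r ^ 2) ^ (α + 1) * (A ^ (-s) * (1 - c * sin t) ^ (-s)) :=
    intervalIntegral.integral_congr fun t _ => by
      simp only [hfac _ (abs_sin_le_one t)]
  have hint₁ : IntervalIntegrable (fun t => (1 - c * sin t) ^ (-s)) MeasureTheory.volume 0 π :=
    (Continuous.rpow_const (by fun_prop)
      fun t => Or.inl (hpos _ (abs_sin_le_one t)).ne').intervalIntegrable _ _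
  have hint₂ : IntervalIntegrable (fun t => (1 + c * sin t) ^ (-s)) MeasureTheory.volume 0 π :=
    (Continuous.rpow_const (by fun_prop)
      fun t => Or.inl (hpos' t).ne').intervalIntegrable _ _
  rw [hshift, hfirst]
  simp only [intervalIntegral.integral_const_mul]
  rw [← mul_sub, ← mul_sub, ← intervalIntegral.integral_sub hint₁ hint₂,
    ← (hasSum_integral_odd_part hs hc0 hc1).tsum_eq, ← mul_assoc, ← mul_assoc, ← tsum_mul_left,
    ← tsum_mul_left]
  refine tsum_congr fun k => ?_
  have hp := poch_pos (show (0 : ℝ) < 3 / 2 by norm_num) k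
  have hApow : A ^ (2 + α / 2) = A ^ s * A := by
    rw [← Real.rpow_add_one hA.ne']; congr 1; rw [hs_def]; ring
  have hck : (4 * r ^ 2 / A ^ 2) ^ k = c ^ (2 * k) := by
    rw [pow_mul, hc_def, div_pow (2 * r), mul_pow]; norm_num
  rw [poch_odd, factorial_odd, poch_one, hApow, hck, Real.rpow_neg hA.le, add_comm α 1,
    show (s + 1) / 2 = 1 + α / 4 by rw [hs_def]; ring,
    show (s + 2) / 2 = 3 / 2 + α / 4 by rw [hs_def]; ring,
    show 2 + α = 2 * s by rw [hs_def]; ring, pow_succ,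
    show 2 * (2 * s) * r = 2 * s * (A * c) by rw [hcA]; ring]
  have hAs : 0 < A ^ s := Real.rpow_pos_of_pos hA s
  have hk : (0 : ℝ) < k.factorial := by positivity
  field_simp
  ring
end
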